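/- arXiv:2603.22076 — 3 statements merged into one kernel-verified Lean document; each statement's English description precedes it below -/
import Mathlib

section
/- Let γ > 2 and μ > 0 be real numbers, and let f : ℝ → ℝ be defined by f(s) = |s|^{γ-2} s ln|s| for s ≠ 0 and f(0) = 0. There exists a constant C_μ > 0 such that for all real a and b, |f(a) − f(b)| ≤ C_μ·(1 + |a|^{γ-2+μ} + |b|^{γ-2+μ})·|a − b|. -/
/-!
Put `p = γ - 2` and `q = p + μ`. For `s > 0`, `s ^ p * |log s|` is bounded by `1 / p` on `(0, 1]` and
by `s ^ q / μ` on `[1, ∞)` (`rpow_mul_abs_log_le`). Hence the derivative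
`(p + 1) * s ^ p * log s + s ^ p` of `s ^ (p + 1) * log s` is at most a constant times `1 + s ^ q`,
and the mean value inequality settles the case of two positive arguments (`pos_case`); oddness of
`f` settles two negative ones. When the arguments have opposite signs or one vanishes,
`|a - b| = |a| + |b|`, so the pointwise bound `|f s| ≤ K * (1 + |s| ^ q) * |s|` suffices and no
differentiability at `0` is needed.
-/

lemma rpow_mul_abs_log_le {p μ s : ℝ} (hp : 0 < p) (hμ : 0 < μ) (hs : 0 < s) :
    s ^ p * |Real.log s| ≤ (1 / p + 1 / μ) * (1 + s ^ (p + μ)) := by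
  have hq : 0 < s ^ (p + μ) := Real.rpow_pos_of_pos hs _
  have h1 : 0 < 1 / p := by positivity
  have h2 : 0 < 1 / μ := by positivity
  have h3 := mul_pos h1 hq
  have h4 := mul_pos h2 hq
  rcases le_total s 1 with h | h
  · have := Real.abs_log_mul_self_rpow_lt s p hs h hp
    rw [abs_mul, abs_of_pos (Real.rpow_pos_of_pos hs p)] at this
    nlinarith
  · rw [abs_of_nonneg (Real.log_nonneg h)]
    have : s ^ p * Real.log s ≤ s ^ p * (s ^ μ / μ) :=
      mul_le_mul_of_nonneg_left (Real.log_le_rpow_div hs.le hμ) (Real.rpow_nonneg hs.le p)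
    have e : s ^ p * (s ^ μ / μ) = 1 / μ * s ^ (p + μ) := by
      rw [Real.rpow_add hs]; ring
    nlinarith

lemma rpow_le_one_add {p μ s : ℝ} (hp : 0 < p) (hμ : 0 < μ) (hs : 0 < s) :
    s ^ p ≤ 1 + s ^ (p + μ) := by
  have hq : 0 < s ^ (p + μ) := Real.rpow_pos_of_pos hs _
  rcases le_total s 1 with h | h
  · linarith [Real.rpow_le_one hs.le h hp.le]
  · linarith [Real.rpow_le_rpow_of_exponent_le h (by linarith : p ≤ p + μ)]

lemma pos_case {p μ a b : ℝ} (hp : 0 < p) (hμ : 0 < μ) (hb : 0 < b) (hab : b ≤ a) :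
    |a ^ p * a * Real.log a - b ^ p * b * Real.log b| ≤
      ((p + 1) * (1 / p + 1 / μ) + 1) * (1 + a ^ (p + μ)) * |a - b| := by
  have hd : ∀ s ∈ Set.Icc b a, HasDerivWithinAt (fun x : ℝ => x ^ p * x * Real.log x)
      ((p + 1) * (s ^ p * Real.log s) + s ^ p) (Set.Icc b a) s := by
    intro s hs
    have hs0 : 0 < s := hb.trans_le hs.1
    have h := (((Real.hasDerivAt_rpow_const (p := p) (Or.inl hs0.ne')).mul (hasDerivAt_id s)).mul
      (Real.hasDerivAt_log hs0.ne')).hasDerivWithinAt (s := Set.Icc b a)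
    refine h.congr_deriv ?_
    simp only [id, Pi.mul_apply]
    rw [Real.rpow_sub_one hs0.ne']
    field_simp
  refine (convex_Icc b a).norm_image_sub_le_of_norm_hasDerivWithin_le hd ?_
    (Set.left_mem_Icc.2 hab) (Set.right_mem_Icc.2 hab)
  intro s hs
  have hs0 : 0 < s := hb.trans_le hs.1
  have hm : s ^ (p + μ) ≤ a ^ (p + μ) := Real.rpow_le_rpow hs0.le hs.2 (by linarith)
  rw [Real.norm_eq_abs]
  calc |(p + 1) * (s ^ p * Real.log s) + s ^ p|
      ≤ |(p + 1) * (s ^ p * Real.log s)| + |s ^ p| := abs_add_le _ _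
    _ = (p + 1) * (s ^ p * |Real.log s|) + s ^ p := by
        rw [abs_mul, abs_mul, abs_of_pos (Real.rpow_pos_of_pos hs0 p),
          abs_of_pos (by linarith : 0 < p + 1)]
    _ ≤ (p + 1) * ((1 / p + 1 / μ) * (1 + s ^ (p + μ))) + (1 + s ^ (p + μ)) := by
        exact add_le_add
          (mul_le_mul_of_nonneg_left (rpow_mul_abs_log_le hp hμ hs0) (by linarith))
          (rpow_le_one_add hp hμ hs0)
    _ = ((p + 1) * (1 / p + 1 / μ) + 1) * (1 + s ^ (p + μ)) := by ring
    _ ≤ _ := by gcongr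

/-- For γ > 2, μ > 0 and f(s) = |s|^{γ-2} s ln|s| (f(0)=0), there is C_μ > 0 with
|f(a) − f(b)| ≤ C_μ (1 + |a|^{γ-2+μ} + |b|^{γ-2+μ}) |a − b| for all real a, b. -/
theorem stmt_7 (γ μ : ℝ) (hγ : 2 < γ) (hμ : 0 < μ) (f : ℝ → ℝ)
    (hf : ∀ s : ℝ, s ≠ 0 → f s = |s| ^ (γ - 2) * s * Real.log |s|) (hf0 : f 0 = 0) :
    ∃ C : ℝ, 0 < C ∧ ∀ a b : ℝ,
      |f a - f b| ≤ C * (1 + |a| ^ (γ - 2 + μ) + |b| ^ (γ - 2 + μ)) * |a - b| := by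
  obtain ⟨p, hpdef⟩ : ∃ p, p = γ - 2 := ⟨_, rfl⟩
  rw [← hpdef] at hf ⊢
  have hp : 0 < p := by linarith
  obtain ⟨K, hK⟩ : ∃ K, K = 1 / p + 1 / μ := ⟨_, rfl⟩
  have hK0 : 0 < K := by rw [hK]; positivity
  have hKC : K ≤ (p + 1) * K + 1 := by nlinarith
  have hC0 : 0 < (p + 1) * K + 1 := by positivity
  have hodd : ∀ s, f (-s) = -f s := by
    intro s
    rcases eq_or_ne s 0 with rfl | h
    · simp [hf0]
    · rw [hf _ (neg_ne_zero.2 h), hf _ h, abs_neg]; ring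
  have hpt : ∀ s, |f s| ≤ ((p + 1) * K + 1) * (1 + |s| ^ (p + μ)) * |s| := by
    intro s
    rcases eq_or_ne s 0 with rfl | h
    · simp [hf0]
    · have h0 : 0 < |s| := abs_pos.2 h
      have := rpow_mul_abs_log_le hp hμ h0
      rw [← hK] at this
      rw [hf s h, abs_mul, abs_mul, abs_of_pos (Real.rpow_pos_of_pos h0 p)]
      calc |s| ^ p * |s| * |Real.log (|s|)| = |s| ^ p * |Real.log (|s|)| * |s| := by ring
        _ ≤ K * (1 + |s| ^ (p + μ)) * |s| := by gcongr
        _ ≤ _ := by gcongr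
  have hnn : ∀ s : ℝ, 0 ≤ |s| ^ (p + μ) := fun s => Real.rpow_nonneg (abs_nonneg s) _
  have hle : ∀ a b : ℝ, 0 < b → b ≤ a → |f a - f b| ≤
      ((p + 1) * K + 1) * (1 + |a| ^ (p + μ) + |b| ^ (p + μ)) * |a - b| := by
    intro a b hb hab
    have ha : 0 < a := hb.trans_le hab
    have h := pos_case hp hμ hb hab
    have hbq := hnn b
    rw [← hK] at h
    rw [hf a ha.ne', hf b hb.ne']
    rw [abs_of_pos hb] at hbq ⊢
    rw [abs_of_pos ha]
    refine h.trans ?_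
    gcongr _ * ?_ * _
    linarith
  have hpos : ∀ a b : ℝ, 0 < a → 0 < b → |f a - f b| ≤
      ((p + 1) * K + 1) * (1 + |a| ^ (p + μ) + |b| ^ (p + μ)) * |a - b| := by
    intro a b ha hb
    rcases le_total b a with h | h
    · exact hle a b hb h
    · have := hle b a ha h
      rwa [abs_sub_comm, abs_sub_comm b a, add_right_comm] at this
  have hopp : ∀ a b : ℝ, |a - b| = |a| + |b| → |f a - f b| ≤
      ((p + 1) * K + 1) * (1 + |a| ^ (p + μ) + |b| ^ (p + μ)) * |a - b| := by
    intro a b h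
    rw [h, mul_add]
    refine (abs_sub _ _).trans (add_le_add ((hpt a).trans ?_) ((hpt b).trans ?_))
    · gcongr _ * ?_ * _
      linarith [hnn b]
    · gcongr _ * ?_ * _
      linarith [hnn a]
  refine ⟨(p + 1) * K + 1, hC0, fun a b => ?_⟩
  rcases lt_or_ge 0 a with ha | ha <;> rcases lt_or_ge 0 b with hb | hb
  · exact hpos a b ha hb
  · apply hopp
    rw [abs_of_pos ha, abs_of_nonpos hb, abs_of_nonneg (by linarith)]; ring
  · apply hopp
    rw [abs_of_nonpos ha, abs_of_pos hb, abs_of_nonpos (by linarith)]; ring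
  · rcases ha.eq_or_lt with rfl | ha
    · exact hopp _ _ (by simp)
    rcases hb.eq_or_lt with rfl | hb
    · exact hopp _ _ (by simp)
    have := hpos (-a) (-b) (by linarith) (by linarith)
    rw [hodd, hodd, abs_neg, abs_neg] at this
    rwa [← neg_sub', ← neg_sub', abs_neg, abs_neg] at this
end

section
/- Let b > τ > 0 and α ≠ 0 be real numbers and σ ∈ {1, −1}. For ω > 0 define P_ω(s) = (s² + ω²)·(τ s³ + s² + b ω² s + ω²) − α²·(1 + τ s) and the Newton quotient δ(ω) = −P_ω(σ i ω) / P_ω′(σ i ω) (well defined since P_ω′(σ i ω) = −2(b−τ)ω⁴ − α²τ ≠ 0). Then, as ω → ∞, the function ω ↦ δ(ω) + α²/(2(b−τ)ω⁴) + σ i α² τ/(2(b−τ)ω³) is O(ω^{−5}); that is, there exist C > 0 and Ω₀ > 0 such that for all ω ≥ Ω₀, |δ(ω) + α²/(2(b−τ)ω⁴) + σ i α² τ/(2(b−τ)ω³)| ≤ C·ω^{−5}. -/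
/-!
At the uncoupled root `s = σ i ω` one has `s² = -ω²`, so `P_ω(s) = -α² (1 + τ s)` and
`P_ω'(s) = -(D + k)` with `D = 2 (b - τ) ω⁴` and `k = α² τ`. The two leading terms are exactly
`α² (1 + τ s) / D`, hence the remainder is
`α² (1 + τ s) (1 / D - 1 / (D + k)) = α² (1 + τ s) k / (D (D + k))`,
which is even `O(ω⁻⁷)`.
-/

/-- The derivative of the modal polynomial at a root `s` of the wave factor. -/
theorem deriv_modal (τ b α w s : ℂ) (hs : s ^ 2 = -w ^ 2) :
    deriv (fun s : ℂ => (s ^ 2 + w ^ 2) * (τ * s ^ 3 + s ^ 2 + b * w ^ 2 * s + w ^ 2) -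
      α ^ 2 * (1 + τ * s)) s = -(2 * (b - τ) * w ^ 4 + α ^ 2 * τ) := by
  have h2 : HasDerivAt (fun s : ℂ => s ^ 2) (2 * s) s := by
    simpa using hasDerivAt_pow 2 s
  have h3 : HasDerivAt (fun s : ℂ => s ^ 3) (3 * s ^ 2) s := by
    simpa using hasDerivAt_pow 3 s
  have h1 := hasDerivAt_id' s
  have h := ((h2.add_const (w ^ 2)).mul
    ((((h3.const_mul τ).add h2).add (h1.const_mul (b * w ^ 2))).add_const (w ^ 2))).sub
    (((h1.const_mul τ).const_add 1).const_mul (α ^ 2))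
  refine (HasDerivAt.deriv h).trans ?_
  simp only [Pi.add_apply]
  linear_combination (2 * s * (τ * s + 1) + (τ * 3 * s ^ 2 + 2 * s + b * w ^ 2) +
    2 * (b - τ) * w ^ 2) * hs

/-- Expansion of the one-step Newton correction at the uncoupled wave root:
δ(ω) = −P_ω(σiω)/P_ω′(σiω) satisfies
δ(ω) = −α²/(2(b−τ)ω⁴) − σ i α²τ/(2(b−τ)ω³) + O(ω⁻⁵) as ω → ∞. -/
theorem stmt_16 (τ b α σ : ℝ) (hτ : 0 < τ) (hb : τ < b) (hα : α ≠ 0)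
    (hσ : σ = 1 ∨ σ = -1) (P : ℝ → ℂ → ℂ)
    (hP : ∀ ω : ℝ, 0 < ω → ∀ s : ℂ, P ω s =
      (s ^ 2 + (ω : ℂ) ^ 2) *
        ((τ : ℂ) * s ^ 3 + s ^ 2 + (b : ℂ) * (ω : ℂ) ^ 2 * s + (ω : ℂ) ^ 2) -
      (α : ℂ) ^ 2 * (1 + (τ : ℂ) * s))
    (δ : ℝ → ℂ)
    (hδ : ∀ ω : ℝ, 0 < ω → δ ω =
      -(P ω ((σ : ℂ) * Complex.I * (ω : ℂ))) /
        deriv (P ω) ((σ : ℂ) * Complex.I * (ω : ℂ))) :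
    ∃ C Ω₀ : ℝ, 0 < C ∧ 0 < Ω₀ ∧ ∀ ω : ℝ, Ω₀ ≤ ω →
      ‖δ ω + ((α ^ 2 / (2 * (b - τ) * ω ^ 4) : ℝ) : ℂ) +
          (σ : ℂ) * Complex.I * ((α ^ 2 * τ / (2 * (b - τ) * ω ^ 3) : ℝ) : ℂ)‖ ≤
        C * ω ^ (-5 : ℤ) := by
  have hβ : 0 < b - τ := sub_pos.mpr hb
  have hα2 : 0 < α ^ 2 := by positivity
  refine ⟨α ^ 2 * (1 + τ) * (α ^ 2 * τ) / (2 * (b - τ)) ^ 2, 1, by positivity, one_pos, ?_⟩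
  intro ω hω
  have hω0 : 0 < ω := by linarith
  set s : ℂ := (σ : ℂ) * Complex.I * (ω : ℂ) with hs_def
  have hσ2 : (σ : ℂ) ^ 2 = 1 := by rcases hσ with h | h <;> simp [h]
  have hs : s ^ 2 = -(ω : ℂ) ^ 2 := by
    rw [hs_def, mul_pow, mul_pow, hσ2, Complex.I_sq]; ring
  have hsn : ‖s‖ = ω := by
    rcases hσ with h | h <;> simp [hs_def, h, abs_of_pos hω0]
  have hd : deriv (P ω) s = -(2 * ((b : ℂ) - τ) * (ω : ℂ) ^ 4 + (α : ℂ) ^ 2 * τ) := by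
    rw [funext (hP ω hω0)]
    exact deriv_modal _ _ _ _ _ hs
  have hv : P ω s = -((α : ℂ) ^ 2 * (1 + (τ : ℂ) * s)) := by
    rw [hP ω hω0 s, hs]; ring
  set D : ℝ := 2 * (b - τ) * ω ^ 4 with hD
  set k : ℝ := α ^ 2 * τ with hk
  have hD0 : 0 < D := by positivity
  have hk0 : 0 < k := by positivity
  have hDC : (D : ℂ) ≠ 0 := by exact_mod_cast hD0.ne'
  have hDkC : (D : ℂ) + k ≠ 0 := by exact_mod_cast (add_pos hD0 hk0).ne'
  have hδ' : δ ω = -((α : ℂ) ^ 2 * (1 + τ * s)) / ((D : ℂ) + k) := by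
    rw [hδ ω hω0, hv, hd, neg_div_neg_eq, hD, hk, neg_div]
    push_cast
    rw [neg_div]
  have hlead : (σ : ℂ) * Complex.I * ((k / (2 * (b - τ) * ω ^ 3) : ℝ) : ℂ) =
      (α : ℂ) ^ 2 * (τ * s) / D := by
    have hreal : k / (2 * (b - τ) * ω ^ 3) = α ^ 2 * τ * ω / D := by
      rw [hD, hk]; field_simp
    rw [hreal, hs_def]; push_cast; ring
  have hrem : δ ω + ((α ^ 2 / D : ℝ) : ℂ) +
      (σ : ℂ) * Complex.I * ((k / (2 * (b - τ) * ω ^ 3) : ℝ) : ℂ) =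
      ((α ^ 2 * k / (D * (D + k)) : ℝ) : ℂ) * (1 + τ * s) := by
    rw [hδ', hlead]; push_cast; field_simp; ring
  rw [hrem, norm_mul, Complex.norm_real, Real.norm_of_nonneg (by positivity)]
  have hn : ‖1 + (τ : ℂ) * s‖ ≤ (1 + τ) * ω := by
    calc ‖1 + (τ : ℂ) * s‖ ≤ ‖(1 : ℂ)‖ + ‖(τ : ℂ) * s‖ := norm_add_le _ _
      _ = 1 + τ * ω := by
        rw [norm_mul, hsn, Complex.norm_real, Real.norm_of_nonneg hτ.le, norm_one]
      _ ≤ (1 + τ) * ω := by linarith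
  calc α ^ 2 * k / (D * (D + k)) * ‖1 + (τ : ℂ) * s‖
      ≤ α ^ 2 * k / (D * D) * ((1 + τ) * ω) := by
        gcongr
        linarith
    _ = α ^ 2 * (1 + τ) * k / (2 * (b - τ)) ^ 2 * (ω ^ 7)⁻¹ := by
        rw [hD]; field_simp
    _ ≤ α ^ 2 * (1 + τ) * k / (2 * (b - τ)) ^ 2 * (ω ^ 5)⁻¹ := by
        gcongr
        norm_num
    _ = α ^ 2 * (1 + τ) * k / (2 * (b - τ)) ^ 2 * ω ^ (-5 : ℤ) := by
        rw [zpow_neg]; norm_cast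
end

section
/- Let b > τ > 0 and α ≠ 0 be real numbers, and fix σ ∈ {1, −1}. For λ > 0 define the complex polynomial P_λ(s) = (s² + λ)·(τ s³ + s² + b λ s + λ) − α²·(1 + τ s). Then there exist constants C > 0 and Λ > 0 such that for every λ ≥ Λ there exists s ∈ ℂ with P_λ(s) = 0 and |s − (σ i √λ − α²/(2(b−τ)λ²) − σ i α² τ/(2(b−τ)λ^{3/2}))| ≤ C·λ^{−5/2}. -/
/-!
Write `x = 1 / √λ`, `J = σ i` and let `s₀ = J / x + x³ e`, with
`e = -α² (x + J τ) / (2 (b - τ))`, be the approximate root. The leading terms of `P_λ(s₀)` cancel,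
leaving `P_λ(s₀) = x³ F(x)` and `P_λ'(s₀) = x⁻⁴ G(x)` with `F`, `G` polynomials in `x` and
`G(0) = -2 (b - τ) ≠ 0`. Since `p' / p` is the sum of `1 / (s₀ - r)` over the roots `r`, a
polynomial of degree at most `5` has a root within `5 |p(s₀) / p'(s₀)|` of `s₀`
(`exists_root_near`). Here this distance is `O(x⁷)`, hence `O(λ^{-5/2})`.
-/

open Polynomial in
/-- The root of `p` nearest to `z` is within `n |p(z) / p'(z)|` of `z`, where `n` bounds the
degree: otherwise `p'(z) / p(z) = ∑ 1 / (z - r)` would be too small. -/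
lemma exists_root_near (p : ℂ[X]) (n : ℕ) (hn : p.natDegree ≤ n) (z : ℂ)
    (hd : p.derivative.eval z ≠ 0) :
    ∃ r : ℂ, p.eval r = 0 ∧ ‖r - z‖ ≤ n * (‖p.eval z‖ / ‖p.derivative.eval z‖) := by
  by_cases h0 : p.eval z = 0
  · exact ⟨z, h0, by simp [h0]⟩
  by_contra! hcon
  have hdp : 0 < ‖p.derivative.eval z‖ := norm_pos_iff.2 hd
  have h0p : 0 < ‖p.eval z‖ := norm_pos_iff.2 h0
  have hsum := (IsAlgClosed.splits p).eval_derivative_div_eval_of_ne_zero h0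
  have hroots : p.roots ≠ 0 := by
    intro h
    rw [h] at hsum
    simp [hd, h0] at hsum
  have hcard : p.roots.card ≤ n := (p.card_roots').trans hn
  have hnpos : (0 : ℝ) < n := by
    have := Multiset.card_pos.2 hroots
    exact_mod_cast lt_of_lt_of_le this hcard
  set c : ℝ := ‖p.derivative.eval z‖ / (n * ‖p.eval z‖) with hc
  have hcpos : 0 < c := by positivity
  have hlt : (p.roots.map fun r => ‖1 / (z - r)‖).sum < (p.roots.map fun _ => c).sum := by
    apply Multiset.sum_lt_sum_of_nonempty hroots
    intro r hr
    have h1 := hcon r (isRoot_of_mem_roots hr)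
    rw [norm_div, norm_one, norm_sub_rev, one_div]
    have h2 : n * (‖p.eval z‖ / ‖p.derivative.eval z‖) = c⁻¹ := by
      rw [hc, inv_div]; ring
    rw [h2] at h1
    exact inv_lt_of_inv_lt₀ hcpos h1
  have hle : ‖(p.roots.map fun r => 1 / (z - r)).sum‖
      ≤ (p.roots.map fun r => ‖1 / (z - r)‖).sum := by
    have := norm_multiset_sum_le (p.roots.map fun r => 1 / (z - r))
    simpa [Multiset.map_map, Function.comp_def] using this
  rw [← hsum, norm_div] at hle
  have hc2 : (p.roots.map fun _ => c).sum ≤ n * c := by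
    rw [Multiset.map_const', Multiset.sum_replicate, nsmul_eq_mul]
    gcongr
  have hc3 : n * c = ‖p.derivative.eval z‖ / ‖p.eval z‖ := by
    rw [hc]; field_simp
  linarith

/-- High-frequency expansion of the wave-branch characteristic roots: for b > τ > 0, α ≠ 0,
σ = ±1, there are C, Λ > 0 such that for every λ ≥ Λ the polynomial
P_λ(s) = (s² + λ)(τs³ + s² + bλs + λ) − α²(1 + τs) has a root s with
|s − (σ i √λ − α²/(2(b−τ)λ²) − σ i α²τ/(2(b−τ)λ^{3/2}))| ≤ C λ^{−5/2}. -/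
theorem stmt_17 (τ b α σ : ℝ) (hτ : 0 < τ) (hb : τ < b) (hα : α ≠ 0)
    (hσ : σ = 1 ∨ σ = -1) (P : ℝ → ℂ → ℂ)
    (hP : ∀ lam : ℝ, 0 < lam → ∀ s : ℂ, P lam s =
      (s ^ 2 + (lam : ℂ)) *
        ((τ : ℂ) * s ^ 3 + s ^ 2 + (b : ℂ) * (lam : ℂ) * s + (lam : ℂ)) -
      (α : ℂ) ^ 2 * (1 + (τ : ℂ) * s)) :
    ∃ C Λ : ℝ, 0 < C ∧ 0 < Λ ∧ ∀ lam : ℝ, Λ ≤ lam →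
      ∃ s : ℂ, P lam s = 0 ∧
        ‖s - ((σ : ℂ) * Complex.I * (Real.sqrt lam : ℂ) -
            ((α ^ 2 / (2 * (b - τ) * lam ^ 2) : ℝ) : ℂ) -
            (σ : ℂ) * Complex.I *
              ((α ^ 2 * τ / (2 * (b - τ) * lam ^ ((3 : ℝ) / 2)) : ℝ) : ℂ))‖ ≤
          C * lam ^ (-(5 : ℝ) / 2) := by
  have hbτ : 0 < b - τ := sub_pos.2 hb
  set A : ℝ := α ^ 2 / (2 * (b - τ)) with hA
  have hAα : (2 : ℂ) * (b - τ) * A = (α : ℂ) ^ 2 := by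
    have : 2 * (b - τ) * A = α ^ 2 := by rw [hA]; field_simp
    exact_mod_cast this
  set J : ℂ := σ * Complex.I with hJ
  have hJ2 : J ^ 2 = -1 := by
    rcases hσ with rfl | rfl <;> simp [hJ]
  -- `x³ e x` is the correction to `J / x`; `x⁻³ (J (b - τ) + x⁴ (e x) (B x))` is the MGT factor.
  let e : ℝ → ℂ := fun x => -A * (x + J * τ)
  let B : ℝ → ℂ := fun x =>
    (b - 3 * τ) + 2 * J * x + (3 * τ * J + x) * x ^ 4 * e x + τ * x ^ 8 * e x ^ 2
  let F : ℝ → ℂ := fun x =>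
    J * (b - τ) * e x ^ 2 + e x ^ 2 * (2 * J + x ^ 4 * e x) * B x - α ^ 2 * τ * e x
  let G : ℝ → ℂ := fun x =>
    2 * (J + x ^ 4 * e x) * (J * (b - τ) + x ^ 4 * e x * B x)
      + x ^ 4 * e x * (2 * J + x ^ 4 * e x) *
        (3 * τ * (J + x ^ 4 * e x) ^ 2 + 2 * x * (J + x ^ 4 * e x) + b)
      - α ^ 2 * τ * x ^ 4
  have hFc : Continuous F := by fun_prop
  have hGc : Continuous G := by fun_prop
  have hG0 : b - τ < ‖G 0‖ := by
    have : G 0 = ((-2 * (b - τ) : ℝ) : ℂ) := by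
      simp only [G]
      push_cast
      linear_combination 2 * ((b : ℂ) - τ) * hJ2
    rw [this, Complex.norm_real, Real.norm_eq_abs, abs_of_neg (by linarith)]
    linarith
  have hnear : ∀ᶠ x in nhds (0 : ℝ), b - τ < ‖G x‖ ∧ ‖F x‖ < ‖F 0‖ + 1 :=
    (hGc.norm.tendsto 0 |>.eventually (lt_mem_nhds hG0)).and
      (hFc.norm.tendsto 0 |>.eventually (gt_mem_nhds (lt_add_one _)))
  obtain ⟨ε, hε, hball⟩ := Metric.eventually_nhds_iff.1 hnear
  set M := ‖F 0‖ + 1 with hM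
  have hMpos : 0 < M := by positivity
  refine ⟨5 * (M / (b - τ)), 1 + (2 / ε) ^ 2, by positivity, by positivity, fun lam hlam => ?_⟩
  have hlam1 : 1 ≤ lam := by nlinarith [sq_nonneg (2 / ε)]
  have hlam0 : 0 < lam := by linarith
  set t := Real.sqrt lam with ht
  have ht2 : t ^ 2 = lam := Real.sq_sqrt hlam0.le
  have ht1 : 1 ≤ t := Real.one_le_sqrt.2 hlam1
  have ht0 : 0 < t := by linarith
  have htε : 2 / ε ≤ t := Real.le_sqrt_of_sq_le (by linarith)
  set x : ℝ := t⁻¹ with hx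
  have hx0 : 0 < x := inv_pos.2 ht0
  have hx1 : x ≤ 1 := inv_le_one_of_one_le₀ ht1
  have hxε : dist x 0 < ε := by
    rw [Real.dist_0_eq_abs, abs_of_pos hx0]
    have : x ≤ (2 / ε)⁻¹ := inv_anti₀ (by positivity) htε
    rw [inv_div] at this
    linarith
  obtain ⟨hGx, hFx⟩ := hball hxε
  have hxc : (x : ℂ) ≠ 0 := by exact_mod_cast hx0.ne'
  have htx : (t : ℂ) = 1 / x := by rw [hx]; push_cast; simp
  have hlx : (lam : ℂ) = 1 / x ^ 2 := by
    rw [← ht2]; push_cast; rw [htx]; ring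
  have h32 : lam ^ ((3 : ℝ) / 2) = t ^ 3 := by
    rw [ht, Real.sqrt_eq_rpow, ← Real.rpow_natCast, ← Real.rpow_mul hlam0.le]; norm_num
  have h52 : lam ^ (-(5 : ℝ) / 2) = x ^ 5 := by
    rw [hx, ht, Real.sqrt_eq_rpow, ← Real.rpow_neg hlam0.le, ← Real.rpow_natCast,
      ← Real.rpow_mul hlam0.le]; norm_num
  set z : ℂ := J / x + x ^ 3 * e x with hz
  have hz' : J * (t : ℂ) - ((α ^ 2 / (2 * (b - τ) * lam ^ 2) : ℝ) : ℂ) -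
      J * ((α ^ 2 * τ / (2 * (b - τ) * lam ^ ((3 : ℝ) / 2)) : ℝ) : ℂ) = z := by
    have h1 : α ^ 2 / (2 * (b - τ) * lam ^ 2) = A * x ^ 4 := by
      rw [hA, hx, ← ht2]; field_simp
    have h2 : α ^ 2 * τ / (2 * (b - τ) * lam ^ ((3 : ℝ) / 2)) = A * τ * x ^ 3 := by
      rw [hA, hx, h32]; field_simp
    rw [h1, h2, htx, hz]
    simp only [e]
    push_cast
    ring
  rw [hz', h52]
  let p : Polynomial ℂ :=
    (.X ^ 2 + .C (lam : ℂ)) *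
      (.C (τ : ℂ) * .X ^ 3 + .X ^ 2 + .C ((b : ℂ) * lam) * .X + .C (lam : ℂ)) -
      .C ((α : ℂ) ^ 2) * (1 + .C (τ : ℂ) * .X)
  have hpe : ∀ s, p.eval s = P lam s := by
    intro s; rw [hP lam hlam0]; simp [p]
  have hpdeg : p.natDegree ≤ 5 := by
    simp only [p]; compute_degree
  have hw : z ^ 2 + lam = x ^ 2 * e x * (2 * J + x ^ 4 * e x) := by
    rw [hz, hlx]
    generalize e x = E
    field_simp
    linear_combination hJ2
  have hQ : (τ : ℂ) * z ^ 3 + z ^ 2 + b * lam * z + lam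
      = (J * (b - τ) + x ^ 4 * e x * B x) / x ^ 3 := by
    rw [hz, hlx]
    simp only [B]
    generalize e x = E
    field_simp
    linear_combination (τ * J + x + 3 * τ * x ^ 4 * E) * hJ2
  have hPz : p.eval z = x ^ 3 * F x := by
    rw [hpe, hP lam hlam0, hw, hQ]
    have hez : e x = -A * (x + J * τ) := rfl
    simp only [F, hz]
    generalize B x = B' at *
    generalize e x = E at *
    field_simp
    linear_combination 2 * ((b : ℂ) - τ) * E * hJ2 - 2 * ((b : ℂ) - τ) * hez + (x + J * τ) * hAα
  have hDz : p.derivative.eval z = G x / x ^ 4 := by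
    have : p.derivative.eval z = 2 * z * ((τ : ℂ) * z ^ 3 + z ^ 2 + b * lam * z + lam)
        + (z ^ 2 + lam) * (3 * τ * z ^ 2 + 2 * z + b * lam) - α ^ 2 * τ := by
      simp [p, -map_pow]
      ring
    rw [this, hw, hQ, hz, hlx]
    simp only [G]
    generalize B x = B'
    generalize e x = E
    field_simp
  have hGpos : 0 < ‖G x‖ := hbτ.trans hGx
  have hD0 : p.derivative.eval z ≠ 0 := by
    rw [hDz]
    exact div_ne_zero (norm_pos_iff.1 hGpos) (pow_ne_zero _ hxc)
  obtain ⟨r, hr, hrz⟩ := exists_root_near p 5 hpdeg z hD0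
  refine ⟨r, (hpe r).symm.trans hr, hrz.trans ?_⟩
  rw [hPz, hDz, norm_mul, norm_div, norm_pow, norm_pow, Complex.norm_real, Real.norm_eq_abs,
    abs_of_pos hx0]
  have : x ^ 3 * ‖F x‖ / (‖G x‖ / x ^ 4) = x ^ 7 * (‖F x‖ / ‖G x‖) := by
    field_simp
  rw [this]
  have h7 : x ^ 7 ≤ x ^ 5 := pow_le_pow_of_le_one hx0.le hx1 (by norm_num)
  have hFG : ‖F x‖ / ‖G x‖ ≤ M / (b - τ) := by gcongr
  push_cast
  calc 5 * (x ^ 7 * (‖F x‖ / ‖G x‖)) ≤ 5 * (x ^ 5 * (M / (b - τ))) := by gcongr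
    _ = _ := by ring
end
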